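/- For every integer t with 1 ≤ t ≤ 15 there exists a linear code over the field with 31 elements of length 60, dimension 3t, minimum distance at least 60 − 4t, and locality 3. In particular (t = 13), there exists a linear code over the field with 31 elements of length 60, dimension 39, minimum distance at least 8, and locality 3. -/

import Mathlib

/-!
The quotient of the plane quartic `x⁴ + y⁴ + z⁴ + 4x²z² + 7x²y² = 0` over `𝔽₃₁` by the Klein
four-group of sign changes is the conic `U² + V² + W² + 4UW + 7UV = 0` with `U = x²`, `V = y²`,
`W = z²`. Parametrising the conic by `(Q₀ : Q₁ : Q₂)` turns the quartic into the cover
`x² : y² : z² = Q₀ : Q₁ : Q₂` of the line, whose 60 points with nonzero coordinates form 15 full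
fibres of size 4.

The codewords are the values of `x A₀ + y A₁ + z A₂`, where the `Aᵢ` are polynomials of degree `< t`
on the line. On a fibre these are the four conjugates `± x A₀ ± y A₁ ± z A₂` with an even number of
minus signs; they sum to zero, so three of them determine the fourth. Their product is, up to a
constant, the norm of the function to the line, a polynomial of degree at most `4t` in which every
zero of the codeword is counted. The norm does not vanish identically because no product `QᵢQⱼ`
with `i ≠ j` is a square.
-/

open Polynomial
open scoped Finset

section SquareRoots

theorem eq_zero_of_mul_sq_eq_sq {R : Type*} [CommRing R] [IsDomain R] [IsIntegrallyClosed R]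
    {q a b : R} (hq : ¬IsSquare q) (h : q * a ^ 2 = b ^ 2) : a = 0 := by
  by_contra ha
  obtain ⟨c, rfl⟩ : a ∣ b :=
    (IsIntegrallyClosed.pow_dvd_pow_iff two_ne_zero).1 ⟨q, by rw [← h, mul_comm]⟩
  exact hq ⟨c, mul_left_cancel₀ (pow_ne_zero 2 ha) (by linear_combination h)⟩

theorem exists_pow_dvd_sq_sub {R : Type*} [CommRing R] {d q w u : R} (hu : d ∣ 2 * w * u - 1)
    (hw : d ∣ w ^ 2 - q) (n : ℕ) : ∃ v, d ∣ v - w ∧ d ^ n ∣ v ^ 2 - q := by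
  suffices ∃ v, d ∣ v - w ∧ d ^ (n + 1) ∣ v ^ 2 - q from
    this.imp fun v hv => ⟨hv.1, (pow_dvd_pow d n.le_succ).trans hv.2⟩
  induction n with
  | zero => exact ⟨w, by simp, by simpa using hw⟩
  | succ n ih =>
    obtain ⟨v, ⟨f, hf⟩, e, he⟩ := ih
    obtain ⟨r, hr⟩ := hu
    -- Newton's step, with `u` as approximate inverse of the derivative `2 * v`
    refine ⟨v - d ^ (n + 1) * e * u, ⟨f - d ^ n * e * u, ?_⟩,
      ⟨-e * r - 2 * f * e * u + d ^ n * e ^ 2 * u ^ 2, ?_⟩⟩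
    · linear_combination hf
    · linear_combination he - d ^ (n + 1) * e * hr - 2 * d ^ (n + 1) * e * u * hf

theorem exists_eval_eq_and_pow_dvd_sq_sub {K : Type*} [Field K] [NeZero (2 : K)] {q : K[X]}
    {s x : K} (hx : x ≠ 0) (h : q.eval s = x ^ 2) (n : ℕ) :
    ∃ v : K[X], v.eval s = x ∧ (X - C s) ^ n ∣ v ^ 2 - q := by
  have h2x : 2 * x ≠ 0 := mul_ne_zero two_ne_zero hx
  obtain ⟨v, hv, hvq⟩ := exists_pow_dvd_sq_sub (d := X - C s) (q := q) (w := C x)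
    (u := C (2 * x)⁻¹) (by simp [dvd_iff_isRoot, mul_inv_cancel₀ h2x, -mul_inv_rev])
    (by simp [dvd_iff_isRoot, h]) n
  refine ⟨v, ?_, hvq⟩
  simpa [dvd_iff_isRoot, sub_eq_zero] using hv

end SquareRoots

section KleinConj

variable {R : Type*} [CommRing R]

/-- The four conjugates of `a 0 + a 1 + a 2` under the Klein four-group acting on the summands
through its three nontrivial characters. -/
def kleinConj : (Fin 3 → R) →ₗ[R] Fin 4 → R :=
  (!![1, 1, 1; 1, -1, -1; -1, 1, -1; -1, -1, 1] : Matrix (Fin 4) (Fin 3) R).mulVecLin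

/-- The norm of `√(u 0) + √(u 1) + √(u 2)` under the Klein four-group of sign changes, that is, the
product of its conjugates, written as a polynomial in `u`. -/
def kleinNorm (u : Fin 3 → R) : R :=
  2 * ∑ i, u i ^ 2 - (∑ i, u i) ^ 2

theorem kleinConj_apply (a : Fin 3 → R) :
    kleinConj a = ![a 0 + a 1 + a 2, a 0 - a 1 - a 2, -a 0 + a 1 - a 2, -a 0 - a 1 + a 2] := by
  ext k
  fin_cases k <;> simp [kleinConj, Matrix.mulVec, dotProduct, Fin.sum_univ_three, sub_eq_add_neg]

theorem sum_kleinConj (a : Fin 3 → R) : ∑ k, kleinConj a k = 0 := by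
  simp only [kleinConj_apply, Fin.sum_univ_four, Matrix.cons_val]
  ring

theorem prod_kleinConj (a : Fin 3 → R) : ∏ k, kleinConj a k = kleinNorm (a ^ 2) := by
  simp only [kleinConj_apply, kleinNorm, Fin.prod_univ_four, Fin.sum_univ_three, Pi.pow_apply,
    Matrix.cons_val]
  ring

theorem map_kleinConj {S : Type*} [CommRing S] (f : R →+* S) (a : Fin 3 → R) (k : Fin 4) :
    f (kleinConj a k) = kleinConj (f ∘ a) k := by
  fin_cases k <;> simp [kleinConj_apply]

theorem kleinConj_injective [NoZeroDivisors R] [NeZero (2 : R)] :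
    Function.Injective (kleinConj (R := R)) := by
  refine (injective_iff_map_eq_zero _).2 fun a ha => ?_
  have h₀ : a 0 + a 1 + a 2 = 0 := by simpa [kleinConj_apply] using congrFun ha 0
  have h₁ : a 0 - a 1 - a 2 = 0 := by simpa [kleinConj_apply] using congrFun ha 1
  have h₂ : -a 0 + a 1 - a 2 = 0 := by simpa [kleinConj_apply] using congrFun ha 2
  have h₃ : -a 0 - a 1 + a 2 = 0 := by simpa [kleinConj_apply] using congrFun ha 3
  have eq_zero_of_two_mul {b : R} (hb : 2 * b = 0) : b = 0 :=
    (mul_eq_zero.1 hb).resolve_left two_ne_zero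
  ext i
  match i with
  | 0 => exact eq_zero_of_two_mul (by linear_combination h₀ + h₁)
  | 1 => exact eq_zero_of_two_mul (by linear_combination h₀ + h₂)
  | 2 => exact eq_zero_of_two_mul (by linear_combination h₀ + h₃)

theorem kleinNorm_eq_sq_sub_four_mul (u : Fin 3 → R) {i j : Fin 3} (hij : i ≠ j) :
    kleinNorm u = (2 * (u i + u j) - ∑ l, u l) ^ 2 - 4 * (u i * u j) := by
  simp only [kleinNorm, Fin.sum_univ_three]
  fin_cases i <;> fin_cases j <;>
    first | exact absurd rfl hij | (simp only [Fin.zero_eta, Fin.mk_one, Fin.reduceFinMk]; ring)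

theorem kleinNorm_smul (c : R) (u : Fin 3 → R) : kleinNorm (c • u) = c ^ 2 * kleinNorm u := by
  simp only [kleinNorm, Pi.smul_apply, smul_eq_mul, mul_pow, ← Finset.mul_sum]
  ring

theorem dvd_kleinNorm_sub_kleinNorm {d : R} {u v : Fin 3 → R} (h : ∀ i, d ∣ u i - v i) :
    d ∣ kleinNorm u - kleinNorm v := by
  have hsum : d ∣ ∑ i, (u i - v i) := Finset.dvd_sum fun i _ => h i
  have hsq : d ∣ ∑ i, (u i - v i) * (u i + v i) :=
    Finset.dvd_sum fun i _ => (h i).mul_right _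
  convert (hsq.mul_left 2).sub (hsum.mul_right (∑ i, (u i + v i))) using 1
  simp only [kleinNorm, Fin.sum_univ_three]
  ring

theorem eq_zero_of_kleinNorm_mul_sq_eq_zero [IsDomain R] [IsIntegrallyClosed R] [NeZero (2 : R)]
    {q a : Fin 3 → R} (hq : ∀ i j, i ≠ j → ¬IsSquare (q i * q j))
    (h : kleinNorm (q * a ^ 2) = 0) : a = 0 := by
  have mul_eq_zero_of_ne {i j : Fin 3} (hij : i ≠ j) : a i * a j = 0 := by
    rw [kleinNorm_eq_sq_sub_four_mul _ hij, sub_eq_zero] at h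
    have h2 : 2 * (a i * a j) = 0 := by
      refine eq_zero_of_mul_sq_eq_sq (hq i j hij) (.trans ?_ h.symm)
      simp only [Pi.mul_apply, Pi.pow_apply]
      ring
    exact (mul_eq_zero.1 h2).resolve_left two_ne_zero
  funext i
  by_contra hi
  have ha {j : Fin 3} (hj : j ≠ i) : a j = 0 :=
    (mul_eq_zero.1 (mul_eq_zero_of_ne hj.symm)).resolve_left hi
  obtain ⟨j, hj⟩ := exists_ne i
  have hqi : q i ≠ 0 := fun h0 => hq i j hj.symm (by simp [h0])
  rw [kleinNorm, Fintype.sum_eq_single i fun _ hj => by simp [ha hj],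
    Fintype.sum_eq_single i fun _ hj => by simp [ha hj]] at h
  have : (q i * a i ^ 2) ^ 2 = 0 := by
    simp only [Pi.mul_apply, Pi.pow_apply] at h
    linear_combination h
  exact mul_ne_zero hqi (pow_ne_zero 2 hi) (pow_eq_zero_iff two_ne_zero |>.1 this)

end KleinConj

section PolynomialNorm

theorem natDegree_kleinNorm_le {R : Type*} [CommRing R] {u : Fin 3 → R[X]} {n : ℕ}
    (hu : ∀ i, (u i).natDegree ≤ n) : (kleinNorm u).natDegree ≤ 2 * n := by
  have hsum : (∑ i, u i).natDegree ≤ n := natDegree_sum_le_of_forall_le _ _ fun i _ => hu i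
  have hsq : (∑ i, u i ^ 2).natDegree ≤ 2 * n :=
    natDegree_sum_le_of_forall_le _ _ fun i _ => natDegree_pow_le_of_le 2 (hu i)
  refine natDegree_sub_le_of_le (m := 2 * n) (n := 2 * n) ?_ (natDegree_pow_le_of_le 2 hsum)
    |>.trans_eq (max_self _)
  rw [← C_ofNat]
  exact (natDegree_C_mul_le _ _).trans hsq

variable {K : Type*} [Field K]

-- Modulo `(X - C s) ^ 4` each `q i` is `μ` times a square, so that `kleinNorm (q * a ^ 2)` splits
-- into four factors, one for each conjugate.
theorem pow_card_dvd_kleinNorm [DecidableEq K] [NeZero (2 : K)] {q : Fin 3 → K[X]} {s μ : K}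
    {x : Fin 3 → K} (hμ : μ ≠ 0) (hx : ∀ i, x i ≠ 0) (hq : ∀ i, (q i).eval s = μ * x i ^ 2)
    (a : Fin 3 → K[X]) :
    (X - C s) ^ #{k | kleinConj (fun i => x i * (a i).eval s) k = 0} ∣ kleinNorm (q * a ^ 2) := by
  have hq' (i : Fin 3) : (C μ⁻¹ * q i).eval s = x i ^ 2 := by
    simp [hq, inv_mul_cancel_left₀ hμ]
  choose w hws hw using fun i => exists_eval_eq_and_pow_dvd_sq_sub (hx i) (hq' i) 4
  have hsplit : (X - C s) ^ 4 ∣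
      kleinNorm (q * a ^ 2) - C μ ^ 2 * ∏ k, kleinConj (w * a) k := by
    rw [prod_kleinConj, ← kleinNorm_smul]
    refine dvd_kleinNorm_sub_kleinNorm fun i => ?_
    have hμC : C μ * C μ⁻¹ = 1 := by rw [← C_mul, mul_inv_cancel₀ hμ, C_1]
    convert (hw i).mul_left (-C μ * a i ^ 2) using 1
    simp only [Pi.mul_apply, Pi.pow_apply, Pi.smul_apply, smul_eq_mul]
    linear_combination -q i * a i ^ 2 * hμC
  set Z : Finset (Fin 4) := {k | kleinConj (fun i => x i * (a i).eval s) k = 0} with hZ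
  have hdvd : ∀ k ∈ Z, X - C s ∣ kleinConj (w * a) k := by
    intro k hk
    rw [dvd_iff_isRoot, IsRoot, ← coe_evalRingHom, map_kleinConj]
    simpa [hZ, Function.comp_def, hws] using hk
  have hprod : (X - C s) ^ #Z ∣ ∏ k, kleinConj (w * a) k :=
    calc (X - C s) ^ #Z = ∏ _ ∈ Z, (X - C s) := (Finset.prod_const _).symm
      _ ∣ ∏ k ∈ Z, kleinConj (w * a) k := Finset.prod_dvd_prod_of_dvd _ _ hdvd
      _ ∣ ∏ k, kleinConj (w * a) k := Finset.prod_dvd_prod_of_subset _ _ _ Z.subset_univ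
  have hcard : #Z ≤ 4 := Z.card_le_univ
  exact (dvd_sub_left (hprod.mul_left _)).1 ((pow_dvd_pow _ hcard).trans hsplit)

theorem sum_le_natDegree_of_pow_dvd {ι : Type*} [Fintype ι] {s : ι → K}
    (hs : Function.Injective s) {n : ι → ℕ} {p : K[X]} (hp : p ≠ 0)
    (h : ∀ i, (X - C (s i)) ^ n i ∣ p) : ∑ i, n i ≤ p.natDegree := by
  have hdvd : ∏ i, (X - C (s i)) ^ n i ∣ p :=
    Fintype.prod_dvd_of_coprime (fun i j hij => (pairwise_coprime_X_sub_C hs hij).pow) h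
  calc ∑ i, n i = (∏ i, (X - C (s i)) ^ n i).natDegree := by
        rw [natDegree_prod_of_monic _ _ fun i _ => (monic_X_sub_C _).pow _]
        simp
    _ ≤ p.natDegree := natDegree_le_of_dvd hdvd hp

end PolynomialNorm

section LocallyRecoverable

/-- Every coordinate `i` of a codeword of `C` is determined by at most `r` other coordinates, whose
positions depend only on `i`. -/
def HasLocality {R ι : Type*} [Semiring R] (C : Submodule R (ι → R)) (r : ℕ) : Prop :=
  ∀ i, ∃ I : Finset ι, i ∉ I ∧ I.card ≤ r ∧
    ∀ x ∈ C, ∀ y ∈ C, (∀ j ∈ I, x j = y j) → x i = y i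

/-- `C` is a locally recoverable code of dimension `k`, minimum distance at least `d` and
locality `r`. -/
structure IsLRC {R ι : Type*} [Semiring R] [DecidableEq R] [Fintype ι]
    (C : Submodule R (ι → R)) (k d r : ℕ) : Prop where
  finrank_eq : Module.finrank R C = k
  le_hammingNorm : ∀ x ∈ C, x ≠ 0 → d ≤ hammingNorm x
  hasLocality : HasLocality C r

theorem hasLocality_of_sum_eq_zero {R ι κ : Type*} [Ring R] [Fintype κ]
    {C : Submodule R (ι × κ → R)} (h : ∀ x ∈ C, ∀ i, ∑ k, x (i, k) = 0) :
    HasLocality C (Fintype.card κ - 1) := by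
  classical
  rintro ⟨i, k⟩
  refine ⟨(Finset.univ.erase k).image (Prod.mk i), by simp, ?_, fun x hx y hy hxy => ?_⟩
  · refine Finset.card_image_le.trans_eq ?_
    rw [Finset.card_erase_of_mem (Finset.mem_univ k), Finset.card_univ]
  · have hrest : ∑ l ∈ Finset.univ.erase k, x (i, l) = ∑ l ∈ Finset.univ.erase k, y (i, l) :=
      Finset.sum_congr rfl fun l hl => hxy _ (Finset.mem_image_of_mem _ hl)
    have hsum : ∑ l, x (i, l) = ∑ l, y (i, l) := (h x hx i).trans (h y hy i).symm
    rw [← Finset.add_sum_erase _ _ (Finset.mem_univ k),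
      ← Finset.add_sum_erase _ _ (Finset.mem_univ k), hrest] at hsum
    exact add_right_cancel hsum

theorem HasLocality.map_funCongrLeft {R ι κ : Type*} [Semiring R] {C : Submodule R (ι → R)}
    {r : ℕ} (h : HasLocality C r) (e : κ ≃ ι) :
    HasLocality (C.map (LinearEquiv.funCongrLeft R R e : (ι → R) →ₗ[R] κ → R)) r := by
  intro i
  obtain ⟨I, hiI, hIr, hI⟩ := h (e i)
  refine ⟨I.map e.symm.toEmbedding, by simpa using hiI, by simpa using hIr, ?_⟩
  rintro _ ⟨x, hx, rfl⟩ _ ⟨y, hy, rfl⟩ hxy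
  exact hI x hx y hy fun j hj => by simpa [LinearMap.funLeft] using hxy (e.symm j) (by simpa)

theorem IsLRC.map_funCongrLeft {R ι κ : Type*} [Semiring R] [DecidableEq R] [Fintype ι]
    [Fintype κ] {C : Submodule R (ι → R)} {k d r : ℕ} (h : IsLRC C k d r) (e : κ ≃ ι) :
    IsLRC (C.map (LinearEquiv.funCongrLeft R R e : (ι → R) →ₗ[R] κ → R)) k d r where
  finrank_eq := by rw [LinearEquiv.finrank_map_eq, h.finrank_eq]
  le_hammingNorm := by
    rintro _ ⟨x, hx, rfl⟩ hx0
    have hnorm : hammingNorm (x ∘ e) = hammingNorm x :=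
      Finset.card_equiv e (by simp)
    exact (h.le_hammingNorm x hx (by rintro rfl; simp at hx0)).trans_eq hnorm.symm
  hasLocality := h.hasLocality.map_funCongrLeft e

end LocallyRecoverable

/-- A cover `x 0 ^ 2 : x 1 ^ 2 : x 2 ^ 2 = Q 0 : Q 1 : Q 2` of the projective line with group the
Klein four-group, where the `Q i` have degree at most `2`, together with a family of completely
split fibres with nonzero coordinates: the fibre over `pt j` consists of the points
`(±coord j 0 : ±coord j 1 : ±coord j 2)`. -/
structure KleinCover (K ι : Type*) [Field K] where
  Q : Fin 3 → K[X]
  natDegree_Q_le : ∀ i, (Q i).natDegree ≤ 2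
  not_isSquare_mul : ∀ i j, i ≠ j → ¬IsSquare (Q i * Q j)
  pt : ι → K
  pt_injective : Function.Injective pt
  scale : ι → K
  scale_ne_zero : ∀ j, scale j ≠ 0
  coord : ι → Fin 3 → K
  coord_ne_zero : ∀ j i, coord j i ≠ 0
  eval_Q : ∀ j i, (Q i).eval (pt j) = scale j * coord j i ^ 2

namespace KleinCover

variable {K ι : Type*} [Field K] (Y : KleinCover K ι)

/-- The values of the function `∑ i, x i * a i` at the points of the given fibres, for polynomials
`a i` of degree less than `t`. -/
noncomputable def encoder (t : ℕ) : (Fin 3 → degreeLT K t) →ₗ[K] ι × Fin 4 → K where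
  toFun a p := kleinConj (fun i => Y.coord p.1 i * (a i : K[X]).eval (Y.pt p.1)) p.2
  map_add' a b := by
    ext p
    simp only [Pi.add_apply, Submodule.coe_add, eval_add, mul_add]
    exact congrFun (map_add kleinConj _ _) p.2
  map_smul' c a := by
    ext p
    simp only [Pi.smul_apply, Submodule.coe_smul, eval_smul, smul_eq_mul, mul_left_comm _ c]
    exact congrFun (map_smul kleinConj c _) p.2

/-- The code of all values of functions `∑ i, x i * a i` with polynomials `a i` of degree less
than `t`. -/
noncomputable def code (t : ℕ) : Submodule K (ι × Fin 4 → K) :=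
  LinearMap.range (Y.encoder t)

theorem encoder_apply (t : ℕ) (a : Fin 3 → degreeLT K t) (j : ι) (k : Fin 4) :
    Y.encoder t a (j, k) = kleinConj (fun i => Y.coord j i * (a i : K[X]).eval (Y.pt j)) k :=
  rfl

theorem sum_eq_zero_of_mem_code {t : ℕ} {x : ι × Fin 4 → K} (hx : x ∈ Y.code t) (j : ι) :
    ∑ k, x (j, k) = 0 := by
  obtain ⟨a, rfl⟩ := hx
  simp only [encoder_apply, sum_kleinConj]

theorem natDegree_kleinNorm_mul_sq_le {t : ℕ} {a : Fin 3 → K[X]} (ha : ∀ i, a i ∈ degreeLT K t) :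
    (kleinNorm (Y.Q * a ^ 2)).natDegree ≤ 4 * t := by
  suffices ∀ i, (Y.Q i * a i ^ 2).natDegree ≤ 2 * t from
    (natDegree_kleinNorm_le this).trans_eq (by ring)
  intro i
  rcases eq_or_ne (a i) 0 with h0 | h0
  · simp [h0]
  · have hlt : (a i).natDegree < t := (natDegree_lt_iff_degree_lt h0).2 (mem_degreeLT.1 (ha i))
    have hle := natDegree_mul_le_of_le (Y.natDegree_Q_le i)
      (natDegree_pow_le_of_le 2 (Nat.le_sub_one_of_lt hlt))
    omega

variable [Fintype ι] [NeZero (2 : K)] {t : ℕ}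

theorem encoder_injective (ht : t ≤ Fintype.card ι) : Function.Injective (Y.encoder t) := by
  refine (injective_iff_map_eq_zero _).2 fun a ha => ?_
  have heval (i : Fin 3) (j : ι) : (a i : K[X]).eval (Y.pt j) = 0 := by
    have hj : (fun i => Y.coord j i * (a i : K[X]).eval (Y.pt j)) = 0 :=
      (injective_iff_map_eq_zero _).1 kleinConj_injective _ (funext fun k => congrFun ha (j, k))
    exact (mul_eq_zero.1 (congrFun hj i)).resolve_left (Y.coord_ne_zero j i)
  ext1 i
  refine Subtype.ext (eq_zero_of_degree_lt_of_eval_index_eq_zero Finset.univ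
    Y.pt_injective.injOn ?_ fun j _ => heval i j)
  exact (mem_degreeLT.1 (a i).2).trans_le (Nat.cast_le.2 ht)

theorem finrank_code (ht : t ≤ Fintype.card ι) : Module.finrank K (Y.code t) = 3 * t := by
  rw [code, LinearMap.finrank_range_of_inj (Y.encoder_injective ht),
    Module.finrank_pi_fintype]
  simp [(degreeLTEquiv K t).finrank_eq]

variable [DecidableEq K]

theorem card_zeros_encoder_le {a : Fin 3 → degreeLT K t} (ha : a ≠ 0) :
    #{p | Y.encoder t a p = 0} ≤ 4 * t := by
  let b : Fin 3 → K[X] := fun i => a i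
  have hnorm : kleinNorm (Y.Q * b ^ 2) ≠ 0 := by
    refine fun h => ha ?_
    have : NeZero (2 : K[X]) := ⟨by simpa only [map_ofNat] using C_ne_zero.2 (two_ne_zero (α := K))⟩
    have hb : b = 0 := eq_zero_of_kleinNorm_mul_sq_eq_zero Y.not_isSquare_mul h
    ext1 i
    exact Subtype.ext (congrFun hb i)
  calc #{p | Y.encoder t a p = 0} = ∑ j, #{k | Y.encoder t a (j, k) = 0} := by
        simp only [Finset.card_filter, Fintype.sum_prod_type]
    _ ≤ (kleinNorm (Y.Q * b ^ 2)).natDegree :=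
        sum_le_natDegree_of_pow_dvd Y.pt_injective hnorm fun j =>
          pow_card_dvd_kleinNorm (Y.scale_ne_zero j) (Y.coord_ne_zero j) (Y.eval_Q j) b
    _ ≤ 4 * t := Y.natDegree_kleinNorm_mul_sq_le fun i => (a i).2

theorem isLRC_code (ht : t ≤ Fintype.card ι) :
    IsLRC (Y.code t) (3 * t) (4 * Fintype.card ι - 4 * t) 3 where
  finrank_eq := Y.finrank_code ht
  le_hammingNorm := by
    rintro _ ⟨a, rfl⟩ ha
    have hzeros := Y.card_zeros_encoder_le (a := a) (by rintro rfl; simp at ha)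
    have hcard : #{p | Y.encoder t a p = 0} + hammingNorm (Y.encoder t a) =
        Fintype.card ι * 4 := by
      simpa [hammingNorm] using Finset.card_filter_add_card_filter_not (s := Finset.univ)
        fun p => Y.encoder t a p = 0
    omega
  hasLocality := hasLocality_of_sum_eq_zero fun _ hx j => Y.sum_eq_zero_of_mem_code hx j

end KleinCover

section Quartic

/-- The coefficients of `s²`, `s` and `1` in the parametrisation
`(5s² + 1 : s² + 5s - 1 : 6s² + s + 1)` of the conic `U² + V² + W² + 4UW + 7UV = 0`. -/
def conicCoeff : Fin 3 → Fin 3 → ZMod 31 :=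
  ![![5, 0, 1], ![1, 5, -1], ![6, 1, 1]]

/-- The parameters of the 15 points of the conic over which the quartic has four rational points
with nonzero coordinates. -/
def conicParam : Fin 15 → ZMod 31 :=
  ![2, 3, 4, 5, 6, 7, 13, 15, 17, 18, 20, 21, 28, 29, 30]

/-- One point of the quartic over each point of the conic listed in `conicParam`, normalised to
`z = 1`. -/
def quarticPoint (j : Fin 15) : Fin 3 → ZMod 31 :=
  ![![7, 2, 13, 8, 5, 15, 15, 6, 3, 2, 4, 7, 13, 3, 1] j,
    ![12, 8, 4, 7, 4, 3, 11, 14, 8, 1, 1, 3, 14, 11, 5] j, 1]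

local instance fact_prime_thirtyOne : Fact (Nat.Prime 31) := ⟨by norm_num⟩

local instance neZero_two_zmod : NeZero (2 : ZMod 31) := ⟨by decide⟩

/-- The quartic `x⁴ + y⁴ + z⁴ + 4x²z² + 7x²y² = 0` over `𝔽₃₁` as a Klein four-cover of the conic of
squares of its coordinates. As its points are normalised to `z = 1`, the scale of a fibre is the
value of `6s² + s + 1`. -/
noncomputable def quarticCover : KleinCover (ZMod 31) (Fin 15) where
  Q i := C (conicCoeff i 0) * X ^ 2 + C (conicCoeff i 1) * X + C (conicCoeff i 2)
  natDegree_Q_le _ := natDegree_quadratic_le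
  not_isSquare_mul i j hij h := by
    have heval (s : ZMod 31) := h.map (evalRingHom s)
    simp only [coe_evalRingHom, eval_mul, eval_add, eval_pow, eval_X, eval_C] at heval
    clear h
    revert i j
    decide
  pt := conicParam
  pt_injective := by unfold Function.Injective; decide
  scale j := 6 * conicParam j ^ 2 + conicParam j + 1
  scale_ne_zero := by decide
  coord := quarticPoint
  coord_ne_zero := by decide
  eval_Q j i := by
    simp only [eval_mul, eval_add, eval_pow, eval_X, eval_C]
    revert j i
    decide

end Quartic

theorem exists_LRC_F31_length60 :
    ∀ t : ℕ, 1 ≤ t → t ≤ 15 →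
      ∃ C : Submodule (ZMod 31) (Fin 60 → ZMod 31),
        Module.finrank (ZMod 31) C = 3 * t ∧
        (∀ x : Fin 60 → ZMod 31, x ∈ C → x ≠ 0 →
          60 - 4 * t ≤ Nat.card {i : Fin 60 // x i ≠ 0}) ∧
        (∀ i : Fin 60, ∃ I : Finset (Fin 60), i ∉ I ∧ I.card ≤ 3 ∧
          ∀ x ∈ C, ∀ y ∈ C, (∀ j ∈ I, x j = y j) → x i = y i) := by
  intro t _ ht
  have := fact_prime_thirtyOne
  have := neZero_two_zmod
  have hcode := quarticCover.isLRC_code (t := t) ht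
  have hC := hcode.map_funCongrLeft (finProdFinEquiv (m := 15) (n := 4)).symm
  refine ⟨_, hC.finrank_eq, fun x hx hx0 => ?_, hC.hasLocality⟩
  rw [Nat.card_eq_fintype_card, Fintype.card_subtype]
  exact hC.le_hammingNorm x hx hx0
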